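/- arXiv:2111.07913 — 2 statements merged into one kernel-verified Lean document; each statement's English description precedes it below -/
import Mathlib

section
/- Let A ∈ ℝ^{m×n} and N ⊆ [n] be such that the submatrix A_{[n]\N} (columns indexed by [n] \ N) has linearly independent columns. Then for every z ∈ ker(A), ‖z‖_∞ ≤ κ_A · ‖z_N‖₁. -/
open Matrix
open scoped BigOperators

noncomputable section
open Classical

/-- The set of elementary vectors of `ker(A)`: support-minimal nonzero kernel vectors. -/
def elemVecs {α β : Type} [Fintype α] [Fintype β] (A : Matrix α β ℝ) : Set (β → ℝ) :=
  {g | A.mulVec g = 0 ∧ g ≠ 0 ∧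
    ∀ h : β → ℝ, A.mulVec h = 0 → h ≠ 0 →
      ¬ ({i | h i ≠ 0} ⊂ {i | g i ≠ 0})}

/-- The circuit imbalance measure `κ_A`. -/
def circImb {α β : Type} [Fintype α] [Fintype β] (A : Matrix α β ℝ) : ℝ :=
  sSup {r : ℝ | ∃ g ∈ elemVecs A, ∃ i j, g i ≠ 0 ∧ g j ≠ 0 ∧ r = |g j| / |g i|}

/-!
Extend the independent columns outside `N` to a basis `B` of the column space. Each `j ∉ B` has a
fundamental vector: the `g ∈ ker A` with `g j = 1` that vanishes on the other indices outside `B`.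
It is elementary, so its entries are at most `κ_A` in absolute value. A kernel vector is determined
by its entries outside `B`, hence `z` is the combination of the fundamental vectors with
coefficients `z j`, and `Bᶜ ⊆ N`.

Elementary vectors with equal supports are proportional, so there are only finitely many ratios
and the supremum defining `κ_A` is a genuine one.
-/

lemma mulVec_eq_linearCombination_col {α β R : Type*} [Fintype β] [CommSemiring R]
    (A : Matrix α β R) (l : β →₀ R) : A *ᵥ l = Finsupp.linearCombination R A.col l := by
  rw [Finsupp.linearCombination_apply, Finsupp.sum_fintype _ _ (by simp), mulVec_eq_sum]
  simp only [op_smul_eq_smul, col_def]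

section KernelOfColumns

variable {α β R : Type*} [Fintype β] [CommRing R] {A : Matrix α β R} {B : Set β}

lemma eq_zero_of_mulVec_eq_zero_of_support_subset (hB : LinearIndepOn R A.col B) {z : β → R}
    (hz : A *ᵥ z = 0) (hzB : z.support ⊆ B) : z = 0 := by
  obtain ⟨l, rfl⟩ : ∃ l : β →₀ R, ⇑l = z := Finsupp.equivFunOnFinite.surjective z
  rw [mulVec_eq_linearCombination_col] at hz
  rw [Finsupp.fun_support_eq] at hzB
  rw [linearIndepOn_iff.1 hB l hzB hz, Finsupp.coe_zero]

lemma exists_mulVec_eq_zero_of_col_mem_span {j : β} (hj : j ∉ B)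
    (hspan : A.col j ∈ Submodule.span R (A.col '' B)) :
    ∃ g : β → R, A *ᵥ g = 0 ∧ g j = 1 ∧ g.support ⊆ insert j B := by
  obtain ⟨l, hlB, hl⟩ := (Finsupp.mem_span_image_iff_linearCombination R).1 hspan
  have hl0 : ∀ k ∉ B, l k = 0 := fun k hk => by_contra fun h => hk (hlB (by simpa using h))
  refine ⟨Pi.single j 1 - ⇑l, ?_, by simp [hl0 j hj], fun k hk => ?_⟩
  · rw [mulVec_sub, mulVec_single_one, mulVec_eq_linearCombination_col, hl, sub_self]
  · by_contra hkB
    obtain ⟨hkj, hkB⟩ := not_or.1 hkB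
    exact hk (by simp [Pi.single_eq_of_ne hkj, hl0 k hkB])

lemma eq_sum_smul_of_mulVec_eq_zero (hB : LinearIndepOn R A.col B) {g : β → β → R}
    (hg : ∀ j ∉ B, A *ᵥ g j = 0 ∧ g j j = 1 ∧ (g j).support ⊆ insert j B) {z : β → R}
    (hz : A *ᵥ z = 0) : z = ∑ j with j ∉ B, z j • g j := by
  refine sub_eq_zero.1 (eq_zero_of_mulVec_eq_zero_of_support_subset hB ?_ ?_)
  · have hsum : ∑ j with j ∉ B, A *ᵥ (z j • g j) = 0 :=
      Finset.sum_eq_zero fun j hj => by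
        rw [mulVec_smul, (hg j (Finset.mem_filter.1 hj).2).1, smul_zero]
    rw [mulVec_sub, hz, mulVec_sum, hsum, sub_zero]
  · refine Function.support_subset_iff'.2 fun k hk => ?_
    have hoff : ∀ j ∈ Finset.univ.filter (· ∉ B), j ≠ k → z j * g j k = 0 := fun j hj hjk => by
      have hgk : g j k = 0 := Function.support_subset_iff'.1 (hg j (Finset.mem_filter.1 hj).2).2.2 k
        (not_or.2 ⟨hjk.symm, hk⟩)
      rw [hgk, mul_zero]
    have hsum : ∑ j with j ∉ B, z j * g j k = z k := by
      rw [Finset.sum_eq_single_of_mem k (by simpa using hk) hoff, (hg k hk).2.1, mul_one]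
    simp [hsum]

end KernelOfColumns

lemma support_sub_div_smul_subset {ι K : Type*} [Field K] {g h : ι → K}
    (hsupp : h.support ⊆ g.support) {i : ι} (hi : g i ≠ 0) :
    (h - (h i / g i) • g).support ⊆ g.support \ {i} := by
  refine fun k hk => ⟨fun hgk => hk ?_, ?_⟩
  · have hhk : h k = 0 := Function.support_subset_iff'.1 hsupp k (Function.notMem_support.2 hgk)
    simp [hgk, hhk]
  · rintro rfl
    simp [hi] at hk

section CircuitImbalance

variable {α β : Type} [Fintype α] [Fintype β] {A : Matrix α β ℝ} {B : Set β} {g h : β → ℝ}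

lemma eq_smul_of_mem_elemVecs (hg : g ∈ elemVecs A) (hh : A *ᵥ h = 0)
    (hsupp : h.support ⊆ g.support) {i : β} (hi : g i ≠ 0) : h = (h i / g i) • g := by
  by_contra hne
  have hsub := support_sub_div_smul_subset hsupp hi
  refine hg.2.2 (h - (h i / g i) • g) ?_ (sub_ne_zero.2 hne)
    ((Set.ssubset_iff_of_subset fun k hk => (hsub hk).1).2 ⟨i, hi, fun hk => (hsub hk).2 rfl⟩)
  rw [mulVec_sub, mulVec_smul, hh, hg.1, smul_zero, sub_zero]

lemma mem_elemVecs_of_support_subset_insert (hB : LinearIndepOn ℝ A.col B) (hg : A *ᵥ g = 0)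
    {j : β} (hj : g j ≠ 0) (hsupp : g.support ⊆ insert j B) : g ∈ elemVecs A := by
  refine ⟨hg, fun h0 => hj (congrFun h0 j), fun h hh hne hss => hss.2 ?_⟩
  have heq : h = (h j / g j) • g := by
    refine sub_eq_zero.1 (eq_zero_of_mulVec_eq_zero_of_support_subset hB ?_ fun k hk => ?_)
    · rw [mulVec_sub, mulVec_smul, hh, hg, smul_zero, sub_zero]
    · have hk' := support_sub_div_smul_subset hss.1 hj hk
      exact (hsupp hk'.1).resolve_left hk'.2
  have hc : h j / g j ≠ 0 := fun hc => hne (by rw [heq, hc, zero_smul])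
  change g.support ⊆ h.support
  rw [heq, Function.support_const_smul_of_ne_zero _ _ hc]

/-- The entry ratios `|g j| / |g i|` of elementary vectors, of which `κ_A` is the supremum. -/
def circuitRatios (A : Matrix α β ℝ) : Set ℝ :=
  {r | ∃ g ∈ elemVecs A, ∃ i j, g i ≠ 0 ∧ g j ≠ 0 ∧ r = |g j| / |g i|}

lemma abs_div_abs_eq_of_support_eq (hg : g ∈ elemVecs A) (hh : h ∈ elemVecs A)
    (hsupp : h.support = g.support) {i : β} (hi : g i ≠ 0) (j : β) :
    |h j| / |h i| = |g j| / |g i| := by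
  have hhi : h i ≠ 0 := hsupp.ge hi
  have hj : h j = h i / g i * g j :=
    congrFun (eq_smul_of_mem_elemVecs hg hh.1 hsupp.le hi) j
  rw [hj, abs_mul, abs_div]
  field_simp

lemma finite_circuitRatios (A : Matrix α β ℝ) : (circuitRatios A).Finite := by
  let ratiosAt (S : Set β) (i j : β) : Set ℝ :=
    {r | ∃ g ∈ elemVecs A, g.support = S ∧ g i ≠ 0 ∧ r = |g j| / |g i|}
  have hsub : ∀ S i j, (ratiosAt S i j).Subsingleton := by
    rintro _ i j _ ⟨g, hg, rfl, hi, rfl⟩ _ ⟨h, hh, hS, -, rfl⟩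
    exact (abs_div_abs_eq_of_support_eq hg hh hS hi j).symm
  have hfin : (⋃ S, ⋃ i, ⋃ j, ratiosAt S i j).Finite :=
    Set.finite_iUnion fun S => Set.finite_iUnion fun i => Set.finite_iUnion fun j =>
      (hsub S i j).finite
  refine hfin.subset ?_
  rintro r ⟨g, hg, i, j, hi, -, hr⟩
  simp only [Set.mem_iUnion]
  exact ⟨g.support, i, j, g, hg, rfl, hi, hr⟩

lemma circImb_nonneg (A : Matrix α β ℝ) : 0 ≤ circImb A := by
  refine Real.sSup_nonneg ?_
  rintro _ ⟨g, -, i, j, -, -, rfl⟩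
  positivity

lemma abs_le_circImb_mul_abs (hg : g ∈ elemVecs A) {j : β} (hj : g j ≠ 0) (i : β) :
    |g i| ≤ circImb A * |g j| := by
  by_cases hi : g i = 0
  · rw [hi, abs_zero]
    exact mul_nonneg (circImb_nonneg A) (abs_nonneg _)
  · rw [← div_le_iff₀ (abs_pos.2 hj)]
    exact le_csSup (finite_circuitRatios A).bddAbove ⟨g, hg, j, i, hj, hi, rfl⟩

lemma abs_le_circImb_mul_sum_abs_notMem_basis (hB : LinearIndepOn ℝ A.col B)
    (hspan : ∀ j, A.col j ∈ Submodule.span ℝ (A.col '' B)) {z : β → ℝ} (hz : A *ᵥ z = 0) (i : β) :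
    |z i| ≤ circImb A * ∑ j with j ∉ B, |z j| := by
  choose! g hg using fun j (hj : j ∉ B) => exists_mulVec_eq_zero_of_col_mem_span hj (hspan j)
  have hentry : ∀ j ∉ B, |g j i| ≤ circImb A := fun j hj => by
    obtain ⟨hker, hone, hsupp⟩ := hg j hj
    have hgj : g j j ≠ 0 := hone ▸ one_ne_zero
    simpa [hone] using
      abs_le_circImb_mul_abs (mem_elemVecs_of_support_subset_insert hB hker hgj hsupp) hgj i
  calc |z i| = |∑ j with j ∉ B, z j * g j i| := by
        conv_lhs => rw [eq_sum_smul_of_mulVec_eq_zero hB hg hz]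
        simp
    _ ≤ ∑ j with j ∉ B, |z j * g j i| := Finset.abs_sum_le_sum_abs _ _
    _ ≤ ∑ j with j ∉ B, circImb A * |z j| := Finset.sum_le_sum fun j hj => by
        rw [abs_mul, mul_comm]
        gcongr
        exact hentry j (Finset.mem_filter.1 hj).2
    _ = circImb A * ∑ j with j ∉ B, |z j| := (Finset.mul_sum ..).symm

theorem circuit_N_kappa_general (A : Matrix α β ℝ) (N : Finset β)
    (hInd : LinearIndepOn ℝ A.col {i | i ∉ N}) (z : β → ℝ) (hz : A *ᵥ z = 0) (i : β) :
    |z i| ≤ circImb A * ∑ j ∈ N, |z j| := by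
  obtain ⟨B, -, hNB, hspan, hB⟩ := exists_linearIndepOn_extension hInd (Set.subset_univ _)
  have hBN : Finset.univ.filter (· ∉ B) ⊆ N := fun j hj =>
    by_contra fun hjN => (Finset.mem_filter.1 hj).2 (hNB hjN)
  calc |z i| ≤ circImb A * ∑ j with j ∉ B, |z j| :=
        abs_le_circImb_mul_sum_abs_notMem_basis hB (fun j => hspan ⟨j, trivial, rfl⟩) hz i
    _ ≤ circImb A * ∑ j ∈ N, |z j| :=
        mul_le_mul_of_nonneg_left
          (Finset.sum_le_sum_of_subset_of_nonneg hBN fun _ _ _ => abs_nonneg _) (circImb_nonneg A)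

end CircuitImbalance

/-- If the columns of `A` outside `N` are linearly independent, then for every `z ∈ ker(A)`,
`‖z‖_∞ ≤ κ_A ‖z_N‖₁`. -/
theorem circuit_N_kappa {m n : ℕ} (A : Matrix (Fin m) (Fin n) ℝ) (N : Finset (Fin n))
    (hInd : LinearIndependent ℝ (fun i : {i : Fin n // i ∉ N} => A.transpose i.val))
    (z : Fin n → ℝ) (hz : A.mulVec z = 0) :
    ∀ i, |z i| ≤ circImb A * ∑ j ∈ N, |z j| :=
  circuit_N_kappa_general A N hInd z hz
end
end

section
/- Let A ∈ ℝ^{m×n} have rank m with m < n, b ∈ ℝ^m, P = {x ∈ ℝⁿ : Ax = b, x ≥ 0}. Let B ⊆ [n] be a feasible basis with N = [n] \ B and x* = (A_B⁻¹ b, 0_N) ∈ P the corresponding basic feasible solution. Let x ∈ P with x ≠ x*, let h^(1), …, h^(k) be a conformal circuit decomposition of x* − x with k ≤ n − m, let g = h^(j) for some j maximizing ‖h^(i)_N‖₁ over i ∈ [k], and let x' = aug_P(x, g). Then ‖x'_N‖₁ ≤ (1 − 1/(n−m)) · ‖x_N‖₁, and |x'_i − x_i| ≤ (n − m) · |x*_i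 − x_i| for every i ∈ [n]. -/
open Matrix
open scoped BigOperators

noncomputable section
open Classical

/-!
On `N = Bᶜ` the target `xstar` vanishes, so the direction `g ⊑ xstar - x` only decreases nonnegative
coordinates there, and a step of length `α` lowers `‖x_N‖₁` by exactly `α * ‖g_N‖₁`. By the triangle
inequality a largest of at most `D` summands of `xstar - x` satisfies `‖x_N‖₁ ≤ D * ‖g_N‖₁`.
Conformality makes `α = 1` feasible, hence `α ≥ 1` and the decay. Independence of the columns in `B`
gives `‖g_N‖₁ > 0`, so `α * ‖g_N‖₁ ≤ ‖x_N‖₁` forces `α ≤ D`, hence the movement bound.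
-/

section Augmentation

variable {ι κ μ R : Type*} [CommRing R]

theorem eq_zero_of_mulVec_eq_zero_of_linearIndepOn_col [Fintype ι] {A : Matrix μ ι R}
    {B : Finset ι} (hB : LinearIndepOn R A.col B) {v : ι → R} (hv : A *ᵥ v = 0)
    (hvB : ∀ i ∉ B, v i = 0) : v = 0 := by
  have hcols : ∑ i ∈ B, v i • A.col i = 0 := by
    calc ∑ i ∈ B, v i • A.col i
        = ∑ i, v i • A.col i :=
          Finset.sum_subset B.subset_univ fun i _ hi => by rw [hvB i hi, zero_smul]
      _ = A *ᵥ v := by simp only [mulVec_eq_sum, op_smul_eq_smul]; rfl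
      _ = 0 := hv
  funext i
  by_cases hi : i ∈ B
  · exact linearIndepOn_finset_iff.mp hB v hcols i hi
  · exact hvB i hi

/-- The conformal order `u ⊑ v`: `u` and `v` are sign-compatible and `u` is coordinatewise at most
`v` in absolute value. It is satisfied by each summand `u` of a conformal circuit
decomposition of `v`. -/
def ConformsTo [LinearOrder R] (u v : ι → R) : Prop :=
  ∀ i, 0 ≤ u i * v i ∧ |u i| ≤ |v i|

/-- The polyhedron `{z | A z = b, z ≥ 0}` in standard equality form, the feasible region in which
augmentation steps are taken. -/
def standardPolyhedron [PartialOrder R] [Fintype ι] (A : Matrix μ ι R) (b : μ → R) :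
    Set (ι → R) :=
  {z | A *ᵥ z = b ∧ 0 ≤ z}

variable [LinearOrder R] [IsStrictOrderedRing R]

namespace ConformsTo

theorem mem_uIcc {u v : ι → R} (huv : ConformsTo u v) (i : ι) : u i ∈ Set.uIcc 0 (v i) := by
  obtain ⟨hsign, habs⟩ := huv i
  rw [Set.mem_uIcc]
  rcases lt_trichotomy (v i) 0 with hv | hv | hv
  · have hu : u i ≤ 0 := nonpos_of_mul_nonneg_left hsign hv
    rw [abs_of_nonpos hu, abs_of_neg hv] at habs
    exact Or.inr ⟨neg_le_neg_iff.mp habs, hu⟩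
  · have hu : u i = 0 := by simpa [hv] using habs
    simp [hu, hv]
  · have hu : 0 ≤ u i := nonneg_of_mul_nonneg_left hsign hv
    rw [abs_of_nonneg hu, abs_of_pos hv] at habs
    exact Or.inl ⟨hu, habs⟩

theorem apply_nonpos {u v : ι → R} (huv : ConformsTo u v) {i : ι} (hv : v i ≤ 0) : u i ≤ 0 :=
  (huv.mem_uIcc i).2.trans (sup_le le_rfl hv)

theorem add_nonneg {x y u : ι → R} (huv : ConformsTo u (y - x)) (hx : 0 ≤ x) (hy : 0 ≤ y) :
    0 ≤ x + u := by
  intro i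
  have hlower : min 0 (y i - x i) ≤ u i := (huv.mem_uIcc i).1
  have hxi : 0 ≤ x i := hx i
  have hyi : 0 ≤ y i := hy i
  change 0 ≤ x i + u i
  rcases min_le_iff.mp hlower with h | h <;> linarith

end ConformsTo

theorem add_mem_standardPolyhedron [Fintype ι] {A : Matrix μ ι R} {b : μ → R} {x y g : ι → R}
    (hx : x ∈ standardPolyhedron A b) (hy : 0 ≤ y) (hg : A *ᵥ g = 0)
    (hconf : ConformsTo g (y - x)) : x + g ∈ standardPolyhedron A b :=
  ⟨by rw [mulVec_add, hx.1, hg, add_zero], hconf.add_nonneg hx.2 hy⟩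

theorem sum_compl_abs_pos_of_linearIndepOn_col [Fintype ι] [DecidableEq ι] {A : Matrix μ ι R}
    {B : Finset ι} (hB : LinearIndepOn R A.col B) {v : ι → R} (hv : A *ᵥ v = 0) (hv0 : v ≠ 0) :
    0 < ∑ i ∈ Bᶜ, |v i| := by
  obtain ⟨i, hiB, hi⟩ : ∃ i ∉ B, v i ≠ 0 := by
    by_contra! hvB
    exact hv0 (eq_zero_of_mulVec_eq_zero_of_linearIndepOn_col hB hv hvB)
  exact Finset.sum_pos' (fun _ _ => abs_nonneg _)
    ⟨i, Finset.mem_compl.mpr hiB, abs_pos.mpr hi⟩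

theorem sum_abs_sum_le_card_mul [Fintype κ] (N : Finset ι) {h : κ → ι → R} {M : R}
    (hM : ∀ j, ∑ i ∈ N, |h j i| ≤ M) :
    ∑ i ∈ N, |(∑ j, h j) i| ≤ Fintype.card κ * M :=
  calc ∑ i ∈ N, |(∑ j, h j) i|
      ≤ ∑ i ∈ N, ∑ j, |h j i| := Finset.sum_le_sum fun i _ => by
        rw [Finset.sum_apply]
        exact Finset.abs_sum_le_sum_abs _ _
    _ = ∑ j, ∑ i ∈ N, |h j i| := Finset.sum_comm
    _ ≤ ∑ _j : κ, M := Finset.sum_le_sum fun j _ => hM j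
    _ = Fintype.card κ * M := by simp

section Step

variable {N : Finset ι} {x g : ι → R} {α D : R}

theorem sum_abs_add_smul_eq_sub (hx : 0 ≤ x) (hstep : 0 ≤ x + α • g) (hg : ∀ i ∈ N, g i ≤ 0) :
    ∑ i ∈ N, |(x + α • g) i| = ∑ i ∈ N, |x i| - α * ∑ i ∈ N, |g i| := by
  rw [Finset.mul_sum, ← Finset.sum_sub_distrib]
  refine Finset.sum_congr rfl fun i hi => ?_
  rw [abs_of_nonneg (hstep i), abs_of_nonneg (hx i), abs_of_nonpos (hg i hi)]
  simp

theorem step_length_le_of_sum_abs_le_mul (hx : 0 ≤ x) (hstep : 0 ≤ x + α • g)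
    (hg : ∀ i ∈ N, g i ≤ 0) (hpos : 0 < ∑ i ∈ N, |g i|)
    (hshare : ∑ i ∈ N, |x i| ≤ D * ∑ i ∈ N, |g i|) : α ≤ D := by
  have hremaining : 0 ≤ ∑ i ∈ N, |x i| - α * ∑ i ∈ N, |g i| :=
    sum_abs_add_smul_eq_sub hx hstep hg ▸ Finset.sum_nonneg fun _ _ => abs_nonneg _
  exact le_of_mul_le_mul_right ((sub_nonneg.mp hremaining).trans hshare) hpos

end Step

theorem sum_abs_add_smul_le_one_sub_one_div_mul {𝕜 : Type*} [Field 𝕜] [LinearOrder 𝕜]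
    [IsStrictOrderedRing 𝕜] {N : Finset ι} {x g : ι → 𝕜} {α D : 𝕜} (hx : 0 ≤ x)
    (hstep : 0 ≤ x + α • g) (hg : ∀ i ∈ N, g i ≤ 0) (hα : 1 ≤ α) (hD : 0 < D)
    (hshare : ∑ i ∈ N, |x i| ≤ D * ∑ i ∈ N, |g i|) :
    ∑ i ∈ N, |(x + α • g) i| ≤ (1 - 1 / D) * ∑ i ∈ N, |x i| := by
  have hdecrease : (∑ i ∈ N, |x i|) / D ≤ α * ∑ i ∈ N, |g i| :=
    calc (∑ i ∈ N, |x i|) / D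
        ≤ ∑ i ∈ N, |g i| := (div_le_iff₀' hD).mpr hshare
      _ ≤ α * ∑ i ∈ N, |g i| :=
        le_mul_of_one_le_left (Finset.sum_nonneg fun _ _ => abs_nonneg _) hα
  calc ∑ i ∈ N, |(x + α • g) i|
      = ∑ i ∈ N, |x i| - α * ∑ i ∈ N, |g i| := sum_abs_add_smul_eq_sub hx hstep hg
    _ ≤ ∑ i ∈ N, |x i| - (∑ i ∈ N, |x i|) / D := sub_le_sub_left hdecrease _
    _ = (1 - 1 / D) * ∑ i ∈ N, |x i| := by ring

theorem geometric_decay_general [Fintype ι] [DecidableEq ι] [Fintype κ] {𝕜 : Type*} [Field 𝕜]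
    [LinearOrder 𝕜] [IsStrictOrderedRing 𝕜] {A : Matrix μ ι 𝕜} {b : μ → 𝕜} {B : Finset ι}
    (hB : LinearIndepOn 𝕜 A.col B) {xstar x : ι → 𝕜} (hxstar : 0 ≤ xstar)
    (hxstarB : ∀ i ∉ B, xstar i = 0) (hx : x ∈ standardPolyhedron A b)
    {h : κ → ι → 𝕜} (hsum : ∑ j, h j = xstar - x) {j₀ : κ} (hker : A *ᵥ h j₀ = 0)
    (hne : h j₀ ≠ 0) (hconf : ConformsTo (h j₀) (xstar - x))
    (hmax : ∀ j, ∑ i ∈ Bᶜ, |h j i| ≤ ∑ i ∈ Bᶜ, |h j₀ i|) {D : 𝕜} (hD : Fintype.card κ ≤ D)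
    {α : 𝕜} (hα : IsGreatest {a : 𝕜 | 0 ≤ a ∧ x + a • h j₀ ∈ standardPolyhedron A b} α) :
    ∑ i ∈ Bᶜ, |(x + α • h j₀) i| ≤ (1 - 1 / D) * ∑ i ∈ Bᶜ, |x i| ∧
      ∀ i, |(x + α • h j₀) i - x i| ≤ D * |xstar i - x i| := by
  have hDpos : 0 < D := (Nat.cast_pos.mpr (Fintype.card_pos_iff.mpr ⟨j₀⟩)).trans_le hD
  have hvanish : ∀ i ∈ Bᶜ, (xstar - x) i = -x i := fun i hi => by
    simp [hxstarB i (Finset.mem_compl.mp hi)]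
  have hnonpos : ∀ i ∈ Bᶜ, h j₀ i ≤ 0 := fun i hi =>
    hconf.apply_nonpos (hvanish i hi ▸ neg_nonpos.mpr (hx.2 i))
  have hpos : 0 < ∑ i ∈ Bᶜ, |h j₀ i| := sum_compl_abs_pos_of_linearIndepOn_col hB hker hne
  have hshare : ∑ i ∈ Bᶜ, |x i| ≤ D * ∑ i ∈ Bᶜ, |h j₀ i| :=
    calc ∑ i ∈ Bᶜ, |x i|
        = ∑ i ∈ Bᶜ, |(∑ j, h j) i| :=
          Finset.sum_congr rfl fun i hi => by rw [hsum, hvanish i hi, abs_neg]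
      _ ≤ Fintype.card κ * ∑ i ∈ Bᶜ, |h j₀ i| := sum_abs_sum_le_card_mul _ hmax
      _ ≤ D * ∑ i ∈ Bᶜ, |h j₀ i| := mul_le_mul_of_nonneg_right hD hpos.le
  have hstep : 0 ≤ x + α • h j₀ := hα.1.2.2
  have hα_one : 1 ≤ α :=
    hα.2 ⟨zero_le_one, by
      simpa only [one_smul] using add_mem_standardPolyhedron hx hxstar hker hconf⟩
  have hα_le : α ≤ D := step_length_le_of_sum_abs_le_mul hx.2 hstep hnonpos hpos hshare
  refine ⟨sum_abs_add_smul_le_one_sub_one_div_mul hx.2 hstep hnonpos hα_one hDpos hshare,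
    fun i => ?_⟩
  calc |(x + α • h j₀) i - x i|
      = α * |h j₀ i| := by simp [abs_mul, abs_of_nonneg hα.1.1]
    _ ≤ D * |xstar i - x i| := mul_le_mul hα_le (hconf i).2 (abs_nonneg _) hDpos.le

end Augmentation

/-- Geometric decay of `‖x_N‖₁` and movement bound for one step of the
`shoot towards the optimum' scheme. -/
theorem geometric_decay {m n : ℕ} (hmn : m < n)
    (A : Matrix (Fin m) (Fin n) ℝ) (hrank : A.rank = m) (b : Fin m → ℝ)
    (P : Set (Fin n → ℝ)) (hP : P = {z : Fin n → ℝ | A.mulVec z = b ∧ 0 ≤ z})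
    (B : Finset (Fin n)) (hBcard : B.card = m)
    (hBind : LinearIndependent ℝ (fun i : {i : Fin n // i ∈ B} => A.transpose i.val))
    (xstar : Fin n → ℝ) (hxstarP : xstar ∈ P) (hxstar0 : ∀ i ∉ B, xstar i = 0)
    (x : Fin n → ℝ) (hxP : x ∈ P) (hxne : x ≠ xstar)
    (k : ℕ) (hk : k ≤ n - m) (h : Fin k → Fin n → ℝ)
    (hhel : ∀ j, h j ∈ elemVecs A)
    (hhconf : ∀ j i, 0 ≤ h j i * (xstar i - x i) ∧ |h j i| ≤ |xstar i - x i|)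
    (hhsum : (∑ j, h j) = xstar - x)
    (j₀ : Fin k) (hj₀ : ∀ j, (∑ i ∈ Bᶜ, |h j i|) ≤ ∑ i ∈ Bᶜ, |h j₀ i|)
    (g : Fin n → ℝ) (hg : g = h j₀)
    (α : ℝ) (hα : IsGreatest {a : ℝ | 0 ≤ a ∧ x + a • g ∈ P} α)
    (x' : Fin n → ℝ) (hx' : x' = x + α • g) :
    (∑ i ∈ Bᶜ, |x' i|) ≤ (1 - 1 / ((n : ℝ) - m)) * ∑ i ∈ Bᶜ, |x i| ∧
    ∀ i, |x' i - x i| ≤ ((n : ℝ) - m) * |xstar i - x i| := by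
  subst hP hg hx'
  exact geometric_decay_general hBind hxstarP.2 hxstar0 hxP hhsum (hhel j₀).1 (hhel j₀).2.1
    (hhconf j₀) hj₀ (by simpa [Nat.cast_sub hmn.le] using Nat.cast_le (α := ℝ).mpr hk) hα
end
end
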